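/- Let u_1,…,u_m be κ-harmonic functions in ℝ^{d+1}₊ and F = (u_1,…,u_m). At every point (x,y) ∈ ℝ^{d+1}₊ with x regular and |F(x,y)| > 0, one has the identity Δ_κ|F| = |F|^{-3} ∑_{i=0}^{d} (|F|² |∂_{x_i}F|² − ⟨F, ∂_{x_i}F⟩²) + 2|F|^{-1} ∑_{α∈R₊} κ(α) (|F(x,y)| |F(σ_α(x),y)| − ⟨F(x,y), F(σ_α(x),y)⟩)/⟨α,x⟩², where ∂_{x_0} = ∂_y, ∂_{x_i} (1 ≤ i ≤ d) are the partial derivatives in the x-variables, ⟨·,·⟩ is the Euclidean inner product on ℝ^m, |F| = (∑_j u_j²)^{1/2}, ∂_{x_i}F = (∂_{x_i}u_1,…,∂_{x_i}u_m). In particular both sums on the right-hand side are nonnegative. -/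

import Mathlib

/-!
Let `e = F(p)/|F(p)|`. Since `|F| D_v|F| = ⟨F, D_vF⟩`, the scalar functions `|F|` and `⟨e, F⟩` have
the same value and gradient at `p`. In `Δ_κ|F|(p) − Δ_κ⟨e, F⟩(p)` the first-order terms and the
values at `p` therefore cancel, leaving the second derivatives and the values at the reflected
points. Differentiating `|F| D_v|F| = ⟨F, D_vF⟩` once more shows that the second derivatives differ
by `|F|⁻³ (|F|²|D_vF|² − ⟨F, D_vF⟩²)`. If the components of `F` are `κ`-harmonic, then so is their
linear combination `⟨e, F⟩`, and its contribution vanishes. The remaining sums are nonnegative by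
Cauchy–Schwarz.
-/

open MeasureTheory Filter Metric
open scoped RealInnerProductSpace Topology

noncomputable section

/-- Euclidean space `ℝ^d`. -/
abbrev Ed (d : ℕ) : Type := EuclideanSpace ℝ (Fin d)

/-- The reflection `σ_α(x) = x - ⟨α,x⟩α` (for roots normalized by `⟨α,α⟩ = 2`). -/
def reflAt {d : ℕ} (α x : Ed d) : Ed d := x - ⟪α, x⟫ • α

/-- The reflection group `G` generated by the reflections `σ_α`, `α ∈ R`, realized as the
submonoid of self-maps of `ℝ^d` generated by the reflections (each reflection is an
involution, so this is in fact a group of transformations). -/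
def dunklGroup {d : ℕ} (R : Finset (Ed d)) : Submonoid (Function.End (Ed d)) :=
  Submonoid.closure {f : Function.End (Ed d) | ∃ α ∈ R, f = reflAt α}

/-- A (normalized) root system `R` with positive subsystem `Rp` and
`G`-invariant nonnegative multiplicity function `κ`. -/
structure IsRootSystem {d : ℕ} (R Rp : Finset (Ed d)) (κ : Ed d → ℝ) : Prop where
  nonzero : ∀ α ∈ R, α ≠ (0 : Ed d)
  norm_two : ∀ α ∈ R, ⟪α, α⟫ = (2 : ℝ)
  refl_mem : ∀ α ∈ R, ∀ β ∈ R, reflAt α β ∈ R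
  pos_sub : Rp ⊆ R
  pos_split : ∀ α ∈ R, (α ∈ Rp ∧ ¬(-α ∈ Rp)) ∨ (¬(α ∈ Rp) ∧ -α ∈ Rp)
  kappa_nonneg : ∀ α ∈ R, 0 ≤ κ α
  kappa_inv : ∀ σ ∈ dunklGroup R, ∀ α ∈ R, κ (σ α) = κ α

/-- `x ∈ ℝ^d` is regular if `⟨α,x⟩ ≠ 0` for all roots `α ∈ R`. -/
def isRegular {d : ℕ} (R : Finset (Ed d)) (x : Ed d) : Prop :=
  ∀ α ∈ R, ⟪α, x⟫ ≠ (0 : ℝ)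

/-- Second directional derivative of `u` at `p` in direction `v`. -/
def pd2 {d : ℕ} (u : Ed d × ℝ → ℝ) (p v : Ed d × ℝ) : ℝ :=
  fderiv ℝ (fun q => fderiv ℝ u q v) p v

/-- The Euclidean Laplacian on `ℝ^{d+1} = ℝ^d × ℝ`. -/
def lapE {d : ℕ} (u : Ed d × ℝ → ℝ) (p : Ed d × ℝ) : ℝ :=
  (∑ i : Fin d, pd2 u p (EuclideanSpace.single i 1, 0)) + pd2 u p (0, 1)

/-- The Dunkl Laplacian `Δ_κ` on `ℝ^{d+1}` (the Dunkl operators act in the `x`-variables). -/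
def dunklLap {d : ℕ} (Rp : Finset (Ed d)) (κ : Ed d → ℝ) (u : Ed d × ℝ → ℝ)
    (p : Ed d × ℝ) : ℝ :=
  lapE u p + 2 * ∑ α ∈ Rp, κ α *
    (fderiv ℝ u p (α, 0) / ⟪α, p.1⟫ - (u p - u (reflAt α p.1, p.2)) / ⟪α, p.1⟫ ^ 2)

/-- The open upper half-space `ℝ^{d+1}₊`. -/
def upperHS (d : ℕ) : Set (Ed d × ℝ) := {p | 0 < p.2}

/-- `u` is `κ`-harmonic on `Ω`: `u` is `C²` on `Ω` and `Δ_κ u = 0` at every point of `Ω`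
whose `x`-coordinate is regular. -/
def KHarmonicOn {d : ℕ} (R Rp : Finset (Ed d)) (κ : Ed d → ℝ) (u : Ed d × ℝ → ℝ)
    (Ω : Set (Ed d × ℝ)) : Prop :=
  ContDiffOn ℝ 2 u Ω ∧ ∀ p ∈ Ω, isRegular R p.1 → dunklLap Rp κ u p = 0

/-- The cone `Γ_a(x)` of aperture `a` with vertex `(x,0)`. -/
def cone {d : ℕ} (a : ℝ) (x : Ed d) : Set (Ed d × ℝ) :=
  {p | 0 < p.2 ∧ dist p.1 x < a * p.2}

/-- The truncated cone `Γ_a^h(x)`. -/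
def coneT {d : ℕ} (a h : ℝ) (x : Ed d) : Set (Ed d × ℝ) :=
  {p | 0 < p.2 ∧ p.2 < h ∧ dist p.1 x < a * p.2}

/-- `u` has a finite non-tangential limit at `(x,0)`. -/
def HasNTLimit {d : ℕ} (u : Ed d × ℝ → ℝ) (x : Ed d) : Prop :=
  ∀ a > (0 : ℝ), ∃ L : ℝ, Tendsto u (𝓝[cone a x] (x, (0 : ℝ))) (𝓝 L)

/-- `u` is non-tangentially bounded at `(x,0)`. -/
def NTBounded {d : ℕ} (u : Ed d × ℝ → ℝ) (x : Ed d) : Prop :=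
  ∃ a > (0 : ℝ), ∃ h > (0 : ℝ), ∃ M : ℝ, ∀ p ∈ coneT a h x, |u p| ≤ M

/-- A subset of `ℝ^d` is `G`-invariant. -/
def GInvSet {d : ℕ} (R : Finset (Ed d)) (E : Set (Ed d)) : Prop :=
  ∀ σ ∈ dunklGroup R, σ '' E = E

section NormedField

variable {𝕜 E : Type*} [NontriviallyNormedField 𝕜] [NormedAddCommGroup E] [NormedSpace 𝕜 E] {p : E}

theorem differentiableAt_fderiv_apply {G : Type*} [NormedAddCommGroup G] [NormedSpace 𝕜 G]
    {f : E → G} (hf : ContDiffAt 𝕜 2 f p) (v : E) :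
    DifferentiableAt 𝕜 (fun q => fderiv 𝕜 f q v) p :=
  ((hf.fderiv_right (m := 1) (by norm_num)).differentiableAt one_ne_zero).clm_apply
    (differentiableAt_const v)

theorem fderiv_fderiv_sum_const_mul_apply {ι : Type*} {s : Finset ι} {f : ι → E → 𝕜} (c : ι → 𝕜)
    (hf : ∀ j ∈ s, ContDiffAt 𝕜 2 (f j) p) (v w : E) :
    fderiv 𝕜 (fun q => fderiv 𝕜 (fun q => ∑ j ∈ s, c j * f j q) q v) p w =
      ∑ j ∈ s, c j * fderiv 𝕜 (fun q => fderiv 𝕜 (f j) q v) p w := by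
  have hfirst : (fun q => fderiv 𝕜 (fun q => ∑ j ∈ s, c j * f j q) q v) =ᶠ[𝓝 p]
      fun q => ∑ j ∈ s, c j * fderiv 𝕜 (f j) q v := by
    have hnear : ∀ᶠ q in 𝓝 p, ∀ j ∈ s, ContDiffAt 𝕜 2 (f j) q :=
      (eventually_all_finset s).mpr fun j hj => (hf j hj).eventually (by simp)
    filter_upwards [hnear] with q hq
    have hd : ∀ j ∈ s, DifferentiableAt 𝕜 (f j) q := fun j hj =>
      (hq j hj).differentiableAt two_ne_zero
    have hsum := HasFDerivAt.fun_sum fun j hj => (hd j hj).hasFDerivAt.const_mul (c j)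
    simp [hsum.fderiv]
  have hsum := HasFDerivAt.fun_sum fun j hj =>
    (differentiableAt_fderiv_apply (hf j hj) v).hasFDerivAt.const_mul (c j)
  simp [hfirst.fderiv_eq, hsum.fderiv]

end NormedField

section InnerProduct

variable {E H : Type*} [NormedAddCommGroup E] [NormedSpace ℝ E]
  [NormedAddCommGroup H] [InnerProductSpace ℝ H] {F : E → H} {p : E}

theorem fderiv_const_inner_apply (hF : DifferentiableAt ℝ F p) (a : H) (v : E) :
    fderiv ℝ (fun q => ⟪a, F q⟫) p v = ⟪a, fderiv ℝ F p v⟫ := by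
  simp [fderiv_inner_apply ℝ (differentiableAt_const a) hF]

theorem fderiv_fderiv_const_inner_apply (hF : ContDiffAt ℝ 2 F p) (a : H) (v w : E) :
    fderiv ℝ (fun q => fderiv ℝ (fun q => ⟪a, F q⟫) q v) p w =
      ⟪a, fderiv ℝ (fun q => fderiv ℝ F q v) p w⟫ := by
  have hfirst : (fun q => fderiv ℝ (fun q => ⟪a, F q⟫) q v) =ᶠ[𝓝 p]
      fun q => ⟪a, fderiv ℝ F q v⟫ := by
    filter_upwards [hF.eventually (by simp)] with q hq
    exact fderiv_const_inner_apply (hq.differentiableAt two_ne_zero) a v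
  rw [hfirst.fderiv_eq, fderiv_const_inner_apply (differentiableAt_fderiv_apply hF v)]

theorem norm_mul_fderiv_norm_apply (hF : DifferentiableAt ℝ F p) (h0 : F p ≠ 0) (v : E) :
    ‖F p‖ * fderiv ℝ (fun q => ‖F q‖) p v = ⟪F p, fderiv ℝ F p v⟫ := by
  have hsq := ((hF.norm ℝ h0).hasFDerivAt.pow 2).unique hF.hasFDerivAt.norm_sq
  have hv : 2 * ‖F p‖ * fderiv ℝ (fun q => ‖F q‖) p v = 2 * ⟪F p, fderiv ℝ F p v⟫ := by
    simpa using congrArg (fun L : E →L[ℝ] ℝ => L v) hsq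
  linarith

theorem fderiv_norm_eq_fderiv_inner (hF : DifferentiableAt ℝ F p) (h0 : F p ≠ 0) :
    fderiv ℝ (fun q => ‖F q‖) p = fderiv ℝ (fun q => ⟪‖F p‖⁻¹ • F p, F q⟫) p := by
  ext v
  rw [fderiv_const_inner_apply hF, real_inner_smul_left, ← norm_mul_fderiv_norm_apply hF h0,
    inv_mul_cancel_left₀ (norm_ne_zero_iff.mpr h0)]

theorem norm_mul_fderiv_fderiv_norm_apply_add (hF : ContDiffAt ℝ 2 F p) (h0 : F p ≠ 0) (v w : E) :
    ‖F p‖ * fderiv ℝ (fun q => fderiv ℝ (fun q => ‖F q‖) q v) p w +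
        fderiv ℝ (fun q => ‖F q‖) p v * fderiv ℝ (fun q => ‖F q‖) p w =
      ⟪F p, fderiv ℝ (fun q => fderiv ℝ F q v) p w⟫ + ⟪fderiv ℝ F p w, fderiv ℝ F p v⟫ := by
  have hdF : DifferentiableAt ℝ F p := hF.differentiableAt two_ne_zero
  have hfirst : (fun q => ‖F q‖ * fderiv ℝ (fun q => ‖F q‖) q v) =ᶠ[𝓝 p]
      fun q => ⟪F q, fderiv ℝ F q v⟫ := by
    filter_upwards [hF.eventually (by simp), hdF.continuousAt.eventually_ne h0] with q hq hq0
    exact norm_mul_fderiv_norm_apply (hq.differentiableAt two_ne_zero) hq0 v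
  have hsecond := congrArg (fun L : E →L[ℝ] ℝ => L w) hfirst.fderiv_eq
  rw [fderiv_fun_mul (hdF.norm ℝ h0) (differentiableAt_fderiv_apply (hF.norm ℝ h0) v),
    fderiv_inner_apply ℝ hdF (differentiableAt_fderiv_apply hF v)] at hsecond
  simpa using hsecond

end InnerProduct

section GramDeterminant

variable {H : Type*} [NormedAddCommGroup H] [InnerProductSpace ℝ H]

/-- The Gram determinant `|a|²|b|² − ⟨a, b⟩²` of two vectors. -/
def gramDet (a b : H) : ℝ := ‖a‖ ^ 2 * ‖b‖ ^ 2 - ⟪a, b⟫ ^ 2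

theorem gramDet_nonneg (a b : H) : 0 ≤ gramDet a b := by
  rw [gramDet, sub_nonneg, ← mul_pow]
  exact sq_le_sq' (neg_le_of_abs_le (abs_real_inner_le_norm a b)) (real_inner_le_norm a b)

theorem fderiv_fderiv_norm_apply_self {E : Type*} [NormedAddCommGroup E] [NormedSpace ℝ E]
    {F : E → H} {p : E} (hF : ContDiffAt ℝ 2 F p) (h0 : F p ≠ 0) (v : E) :
    fderiv ℝ (fun q => fderiv ℝ (fun q => ‖F q‖) q v) p v =
      fderiv ℝ (fun q => fderiv ℝ (fun q => ⟪‖F p‖⁻¹ • F p, F q⟫) q v) p v +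
        1 / ‖F p‖ ^ 3 * gramDet (F p) (fderiv ℝ F p v) := by
  have hN : ‖F p‖ ≠ 0 := norm_ne_zero_iff.mpr h0
  have hfirst := norm_mul_fderiv_norm_apply (hF.differentiableAt two_ne_zero) h0 v
  have hsecond := norm_mul_fderiv_fderiv_norm_apply_add hF h0 v v
  rw [real_inner_self_eq_norm_sq, ← sub_eq_iff_eq_add'] at hsecond
  rw [fderiv_fderiv_const_inner_apply hF, real_inner_smul_left, gramDet, ← hfirst, ← hsecond]
  field_simp
  ring

end GramDeterminant

section DunklLaplacian

variable {d : ℕ} {Rp : Finset (Ed d)} {κ : Ed d → ℝ} {f g : Ed d × ℝ → ℝ} {p : Ed d × ℝ}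

theorem dunklLap_eq_add_of_fderiv_eq (hfg : f p = g p) (hfg' : fderiv ℝ f p = fderiv ℝ g p) :
    dunklLap Rp κ f p = dunklLap Rp κ g p + (lapE f p - lapE g p) +
      2 * ∑ α ∈ Rp, κ α *
        ((f (reflAt α p.1, p.2) - g (reflAt α p.1, p.2)) / ⟪α, p.1⟫ ^ 2) := by
  have hsplit : ∀ α ∈ Rp, κ α * (fderiv ℝ f p (α, 0) / ⟪α, p.1⟫ -
        (f p - f (reflAt α p.1, p.2)) / ⟪α, p.1⟫ ^ 2) =
      κ α * (fderiv ℝ g p (α, 0) / ⟪α, p.1⟫ -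
        (g p - g (reflAt α p.1, p.2)) / ⟪α, p.1⟫ ^ 2) +
      κ α * ((f (reflAt α p.1, p.2) - g (reflAt α p.1, p.2)) / ⟪α, p.1⟫ ^ 2) := by
    intro α _
    rw [hfg, hfg']
    ring
  rw [dunklLap, dunklLap, Finset.sum_congr rfl hsplit, Finset.sum_add_distrib]
  ring

section Linearity

variable {ι : Type*} {s : Finset ι} {u : ι → Ed d × ℝ → ℝ} (c : ι → ℝ)

theorem lapE_sum_const_mul (hu : ∀ j ∈ s, ContDiffAt ℝ 2 (u j) p) :
    lapE (fun q => ∑ j ∈ s, c j * u j q) p = ∑ j ∈ s, c j * lapE (u j) p := by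
  simp only [lapE, pd2, fderiv_fderiv_sum_const_mul_apply c hu, mul_add, Finset.mul_sum,
    Finset.sum_add_distrib]
  rw [Finset.sum_comm]

theorem dunklLap_sum_const_mul (hu : ∀ j ∈ s, ContDiffAt ℝ 2 (u j) p) :
    dunklLap Rp κ (fun q => ∑ j ∈ s, c j * u j q) p = ∑ j ∈ s, c j * dunklLap Rp κ (u j) p := by
  have hfderiv := HasFDerivAt.fun_sum fun j hj =>
    ((hu j hj).differentiableAt two_ne_zero).hasFDerivAt.const_mul (c j)
  have hroot : ∀ α ∈ Rp, κ α * (fderiv ℝ (fun q => ∑ j ∈ s, c j * u j q) p (α, 0) / ⟪α, p.1⟫ -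
        (∑ j ∈ s, c j * u j p - ∑ j ∈ s, c j * u j (reflAt α p.1, p.2)) / ⟪α, p.1⟫ ^ 2) =
      ∑ j ∈ s, c j * (κ α * (fderiv ℝ (u j) p (α, 0) / ⟪α, p.1⟫ -
        (u j p - u j (reflAt α p.1, p.2)) / ⟪α, p.1⟫ ^ 2)) := by
    intro α _
    simp only [hfderiv.fderiv, sum_apply, smul_apply, smul_eq_mul, ← Finset.sum_sub_distrib,
      Finset.sum_div, Finset.mul_sum]
    exact Finset.sum_congr rfl fun j _ => by ring
  simp only [dunklLap]
  rw [lapE_sum_const_mul c hu, Finset.sum_congr rfl hroot, Finset.sum_comm, Finset.mul_sum,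
    ← Finset.sum_add_distrib]
  refine Finset.sum_congr rfl fun j _ => ?_
  rw [← Finset.mul_sum]
  ring

theorem KHarmonicOn.sum_const_mul {R : Finset (Ed d)} {Ω : Set (Ed d × ℝ)} (hΩ : IsOpen Ω)
    (hu : ∀ j ∈ s, KHarmonicOn R Rp κ (u j) Ω) :
    KHarmonicOn R Rp κ (fun q => ∑ j ∈ s, c j * u j q) Ω := by
  refine ⟨ContDiffOn.sum fun j hj => contDiffOn_const.mul (hu j hj).1, fun p hp hreg => ?_⟩
  rw [dunklLap_sum_const_mul c fun j hj => (hu j hj).1.contDiffAt (hΩ.mem_nhds hp)]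
  exact Finset.sum_eq_zero fun j hj => by rw [(hu j hj).2 p hp hreg, mul_zero]

end Linearity

end DunklLaplacian

section NormIdentity

variable {d : ℕ} {H : Type*} [NormedAddCommGroup H] [InnerProductSpace ℝ H]

/-- The sum `∑_{i=0}^d (|F|²|∂_i F|² − ⟨F, ∂_i F⟩²)` at `p`, the term `i = 0` (the `y`-derivative)
being written last. -/
def gradGramSum (F : Ed d × ℝ → H) (p : Ed d × ℝ) : ℝ :=
  (∑ i : Fin d, gramDet (F p) (fderiv ℝ F p (EuclideanSpace.single i 1, 0))) +
    gramDet (F p) (fderiv ℝ F p (0, 1))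

/-- The sum `∑_{α ∈ R₊} κ(α) (|F||σ_α F| − ⟨F, σ_α F⟩) / ⟨α, x⟩²` at `p = (x, y)`, where
`σ_α F (x, y) = F (σ_α x, y)`. -/
def reflGapSum (Rp : Finset (Ed d)) (κ : Ed d → ℝ) (F : Ed d × ℝ → H) (p : Ed d × ℝ) : ℝ :=
  ∑ α ∈ Rp, κ α * ((‖F p‖ * ‖F (reflAt α p.1, p.2)‖ - ⟪F p, F (reflAt α p.1, p.2)⟫) /
    ⟪α, p.1⟫ ^ 2)

variable {Rp : Finset (Ed d)} {κ : Ed d → ℝ} {F : Ed d × ℝ → H} {p : Ed d × ℝ}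

theorem gradGramSum_nonneg (F : Ed d × ℝ → H) (p : Ed d × ℝ) : 0 ≤ gradGramSum F p :=
  add_nonneg (Finset.sum_nonneg fun _ _ => gramDet_nonneg _ _) (gramDet_nonneg _ _)

theorem reflGapSum_nonneg (hκ : ∀ α ∈ Rp, 0 ≤ κ α) (F : Ed d × ℝ → H) (p : Ed d × ℝ) :
    0 ≤ reflGapSum Rp κ F p :=
  Finset.sum_nonneg fun α hα => mul_nonneg (hκ α hα) <|
    div_nonneg (sub_nonneg.mpr (real_inner_le_norm _ _)) (sq_nonneg _)

theorem lapE_norm (hF : ContDiffAt ℝ 2 F p) (h0 : F p ≠ 0) :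
    lapE (fun q => ‖F q‖) p =
      lapE (fun q => ⟪‖F p‖⁻¹ • F p, F q⟫) p + 1 / ‖F p‖ ^ 3 * gradGramSum F p := by
  simp only [lapE, pd2, fderiv_fderiv_norm_apply_self hF h0, Finset.sum_add_distrib, gradGramSum,
    mul_add, Finset.mul_sum]
  ring

theorem dunkl_lap_norm_identity_general (hκ : ∀ α ∈ Rp, 0 ≤ κ α)
    (hF : ContDiffAt ℝ 2 F p) (h0 : F p ≠ 0) (hreg : ∀ α ∈ Rp, ⟪α, p.1⟫ ≠ 0) :
    dunklLap Rp κ (fun q => ‖F q‖) p =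
        1 / ‖F p‖ ^ 3 * gradGramSum F p + 2 / ‖F p‖ * reflGapSum Rp κ F p +
          dunklLap Rp κ (fun q => ⟪‖F p‖⁻¹ • F p, F q⟫) p ∧
      0 ≤ gradGramSum F p ∧ 0 ≤ reflGapSum Rp κ F p := by
  refine ⟨?_, gradGramSum_nonneg F p, reflGapSum_nonneg hκ F p⟩
  have hN : ‖F p‖ ≠ 0 := norm_ne_zero_iff.mpr h0
  have hvalue : ‖F p‖ = ⟪‖F p‖⁻¹ • F p, F p⟫ := by
    rw [real_inner_smul_left, real_inner_self_eq_norm_sq, sq, inv_mul_cancel_left₀ hN]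
  have hgap : 2 * ∑ α ∈ Rp, κ α * ((‖F (reflAt α p.1, p.2)‖ -
        ⟪‖F p‖⁻¹ • F p, F (reflAt α p.1, p.2)⟫) / ⟪α, p.1⟫ ^ 2) =
      2 / ‖F p‖ * reflGapSum Rp κ F p := by
    rw [reflGapSum, Finset.mul_sum, Finset.mul_sum]
    refine Finset.sum_congr rfl fun α hα => ?_
    have hα : ⟪α, p.1⟫ ≠ 0 := hreg α hα
    rw [real_inner_smul_left]
    field_simp
  rw [dunklLap_eq_add_of_fderiv_eq hvalue
    (fderiv_norm_eq_fderiv_inner (hF.differentiableAt two_ne_zero) h0), lapE_norm hF h0, hgap]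
  ring

end NormIdentity

section Coordinates

theorem fderiv_euclidean_apply {𝕜 E ι : Type*} [RCLike 𝕜] [NormedAddCommGroup E]
    [NormedSpace 𝕜 E] [Finite ι] {F : E → EuclideanSpace 𝕜 ι} {p : E}
    (hF : DifferentiableAt 𝕜 F p) (v : E) (j : ι) :
    fderiv 𝕜 F p v j = fderiv 𝕜 (fun q => F q j) p v := by
  have hcomp : HasFDerivAt (fun q => F q j) (PiLp.proj _ _ j ∘L fderiv 𝕜 F p) p :=
    (hasFDerivWithinAt_euclidean.mp hF.hasFDerivAt.hasFDerivWithinAt j).hasFDerivAt univ_mem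
  simp [hcomp.fderiv]

variable {ι : Type*} [Fintype ι]

theorem real_norm_eq_sqrt_sum_sq (a : EuclideanSpace ℝ ι) : ‖a‖ = √(∑ j, a j ^ 2) := by
  simp [EuclideanSpace.norm_eq]

theorem real_inner_eq_sum_mul (a b : EuclideanSpace ℝ ι) : ⟪a, b⟫ = ∑ j, a j * b j := by
  simp [PiLp.inner_apply, mul_comm]

theorem gramDet_eq_sum (a b : EuclideanSpace ℝ ι) :
    gramDet a b = (∑ j, a j ^ 2) * (∑ j, b j ^ 2) - (∑ j, a j * b j) ^ 2 := by
  rw [gramDet, EuclideanSpace.real_norm_sq_eq, EuclideanSpace.real_norm_sq_eq,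
    real_inner_eq_sum_mul]

end Coordinates

theorem isOpen_upperHS (d : ℕ) : IsOpen (upperHS d) :=
  isOpen_lt continuous_const continuous_snd

/-- **The identity behind Proposition 4.4.** For `κ`-harmonic `u_1, …, u_m` and
`|F| = (∑ u_j²)^{1/2}`, at every point of `ℝ^{d+1}₊` with regular `x`-coordinate where
`|F| > 0`,
`Δ_κ|F| = |F|⁻³ ∑_i (|F|²|∂_i F|² − ⟨F,∂_i F⟩²)
  + 2|F|⁻¹ ∑_{α∈R₊} κ(α)(|F||σ_α F| − ⟨F,σ_α F⟩)/⟨α,x⟩²`,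
and both sums are nonnegative. -/
theorem dunkl_lap_norm_identity
    {d : ℕ} (hd : 1 ≤ d) (R Rp : Finset (Ed d)) (κ : Ed d → ℝ)
    (hRS : IsRootSystem R Rp κ)
    (m : ℕ) (u : Fin m → Ed d × ℝ → ℝ)
    (hu : ∀ j, KHarmonicOn R Rp κ (u j) (upperHS d)) :
    ∀ p ∈ upperHS d, isRegular R p.1 →
      0 < Real.sqrt (∑ j, u j p ^ 2) →
      (dunklLap Rp κ (fun q => Real.sqrt (∑ j, u j q ^ 2)) p =
          (1 / Real.sqrt (∑ j, u j p ^ 2) ^ 3) *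
            ((∑ i : Fin d,
                ((∑ j, u j p ^ 2) *
                    (∑ j, (fderiv ℝ (u j) p (EuclideanSpace.single i 1, 0)) ^ 2) -
                  (∑ j, u j p * fderiv ℝ (u j) p (EuclideanSpace.single i 1, 0)) ^ 2)) +
              ((∑ j, u j p ^ 2) * (∑ j, (fderiv ℝ (u j) p ((0 : Ed d), 1)) ^ 2) -
                (∑ j, u j p * fderiv ℝ (u j) p ((0 : Ed d), 1)) ^ 2)) +
          (2 / Real.sqrt (∑ j, u j p ^ 2)) * ∑ α ∈ Rp, κ α *
            ((Real.sqrt (∑ j, u j p ^ 2) *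
                Real.sqrt (∑ j, u j (reflAt α p.1, p.2) ^ 2) -
              ∑ j, u j p * u j (reflAt α p.1, p.2)) / ⟪α, p.1⟫ ^ 2)) ∧
      (0 ≤ (∑ i : Fin d,
              ((∑ j, u j p ^ 2) *
                  (∑ j, (fderiv ℝ (u j) p (EuclideanSpace.single i 1, 0)) ^ 2) -
                (∑ j, u j p * fderiv ℝ (u j) p (EuclideanSpace.single i 1, 0)) ^ 2)) +
            ((∑ j, u j p ^ 2) * (∑ j, (fderiv ℝ (u j) p ((0 : Ed d), 1)) ^ 2) -
              (∑ j, u j p * fderiv ℝ (u j) p ((0 : Ed d), 1)) ^ 2)) ∧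
      (0 ≤ ∑ α ∈ Rp, κ α *
            ((Real.sqrt (∑ j, u j p ^ 2) *
                Real.sqrt (∑ j, u j (reflAt α p.1, p.2) ^ 2) -
              ∑ j, u j p * u j (reflAt α p.1, p.2)) / ⟪α, p.1⟫ ^ 2)) := by
  intro p hp hreg hS
  let F : Ed d × ℝ → EuclideanSpace ℝ (Fin m) := fun q => WithLp.toLp 2 fun j => u j q
  have hF : ContDiffAt ℝ 2 F p := contDiffAt_euclidean.mpr fun j =>
    (hu j).1.contDiffAt ((isOpen_upperHS d).mem_nhds hp)
  have hF0 : F p ≠ 0 := by rwa [← norm_pos_iff, real_norm_eq_sqrt_sum_sq]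
  have hharm : dunklLap Rp κ (fun q => ⟪‖F p‖⁻¹ • F p, F q⟫) p = 0 := by
    simp only [real_inner_eq_sum_mul]
    exact (KHarmonicOn.sum_const_mul _ (isOpen_upperHS d) fun j _ => hu j).2 p hp hreg
  have hidentity := dunkl_lap_norm_identity_general
    (fun α hα => hRS.kappa_nonneg α (hRS.pos_sub hα)) hF hF0
    (fun α hα => hreg α (hRS.pos_sub hα))
  rw [hharm, add_zero] at hidentity
  simpa only [gradGramSum, reflGapSum, gramDet_eq_sum, real_norm_eq_sqrt_sum_sq,
    real_inner_eq_sum_mul, fderiv_euclidean_apply (hF.differentiableAt two_ne_zero)] using hidentity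

end
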